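/- Let p ≥ 0 be an integer. There exists a constant C > 0 depending only on p such that for every interval (α, β) of length h > 0 with midpoint m = (α+β)/2, and every function g : (α, β) → ℝ that coincides with a polynomial of degree at most p on (α, m) and with a polynomial of degree at most p on (m, β), one has ∫_α^β |g(x)| dx ≥ C h^{1/2} ( ∫_α^β g(x)² dx )^{1/2}. -/

import Mathlib

open MeasureTheory Polynomial

/-- A nonzero real polynomial has positive `L¹` norm on the unit interval. -/
theorem integral_abs_eval_pos {q : ℝ[X]} (hq : q ≠ 0) :
    0 < ∫ x in (0 : ℝ)..1, |q.eval x| := by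
  refine intervalIntegral.integral_pos zero_lt_one q.continuous.abs.continuousOn
    (fun x _ => abs_nonneg _) ?_
  by_contra! h
  refine hq (q.eq_zero_of_infinite_isRoot ((Set.Icc_infinite zero_lt_one).mono fun x hx => ?_))
  exact abs_nonpos_iff.mp (h x hx)

theorem eval_ofFn_eq_sum {n : ℕ} (c : Fin n → ℝ) (x : ℝ) :
    (ofFn n c).eval x = ∑ i, c i * x ^ (i : ℕ) := by
  simp [ofFn_eq_sum_monomial, eval_finsetSum]

/-- On polynomials of bounded degree, the `L¹` norm on the unit interval controls the
coefficients. -/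
theorem exists_norm_le_integral_abs_eval_ofFn (p : ℕ) :
    ∃ K : ℝ, 0 < K ∧ ∀ c : Fin (p + 1) → ℝ,
      ‖c‖ ≤ K * ∫ x in (0 : ℝ)..1, |(ofFn (p + 1) c).eval x| := by
  set N : (Fin (p + 1) → ℝ) → ℝ := fun c => ∫ x in (0 : ℝ)..1, |(ofFn (p + 1) c).eval x| with hN
  have hcont : Continuous N := by
    refine intervalIntegral.continuous_parametric_intervalIntegral_of_continuous' ?_ _ _
    simp only [Function.uncurry_def, eval_ofFn_eq_sum]
    fun_prop
  have hsmul (t : ℝ) (c : Fin (p + 1) → ℝ) : N (t • c) = |t| * N c := by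
    simp [hN, map_smul, abs_mul]
  obtain ⟨c₀, hc₀, hmin⟩ := (isCompact_sphere (0 : Fin (p + 1) → ℝ) 1).exists_isMinOn
    (NormedSpace.sphere_nonempty.mpr zero_le_one) hcont.continuousOn
  have hpos : 0 < N c₀ := by
    refine integral_abs_eval_pos fun h => ?_
    have : c₀ = 0 := by
      funext i
      rw [← ofFn_coeff_eq_val_of_lt c₀ i.2, h, coeff_zero, Pi.zero_apply]
    simp [this] at hc₀
  refine ⟨(N c₀)⁻¹, inv_pos.mpr hpos, fun c => ?_⟩
  rw [inv_mul_eq_div, le_div_iff₀ hpos]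
  rcases eq_or_ne c 0 with rfl | hc
  · simp
  have hc' : 0 < ‖c‖ := norm_pos_iff.mpr hc
  have hle : N c₀ ≤ N (‖c‖⁻¹ • c) := hmin (by simp [norm_smul, hc'.ne'])
  rw [hsmul, abs_of_pos (inv_pos.mpr hc'), inv_mul_eq_div, le_div_iff₀ hc'] at hle
  linarith

/-- Inverse inequality between the sup norm and the `L¹` norm on the unit interval. -/
theorem exists_abs_eval_le_integral_unitInterval (p : ℕ) :
    ∃ K : ℝ, 0 < K ∧ ∀ q : ℝ[X], q.natDegree ≤ p → ∀ x ∈ Set.Icc (0 : ℝ) 1,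
      |q.eval x| ≤ K * ∫ y in (0 : ℝ)..1, |q.eval y| := by
  obtain ⟨K, hK, h⟩ := exists_norm_le_integral_abs_eval_ofFn p
  refine ⟨(p + 1) * K, by positivity, fun q hq x hx => ?_⟩
  have hofFn : ofFn (p + 1) (toFn (p + 1) q) = q :=
    ofFn_comp_toFn_eq_id_of_natDegree_lt (Nat.lt_succ_of_le hq)
  have hc := h (toFn (p + 1) q)
  rw [hofFn] at hc
  calc |q.eval x| = |∑ i, toFn (p + 1) q i * x ^ (i : ℕ)| := by rw [← eval_ofFn_eq_sum, hofFn]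
    _ ≤ ∑ i, |toFn (p + 1) q i * x ^ (i : ℕ)| := Finset.abs_sum_le_sum_abs _ _
    _ ≤ ∑ _i : Fin (p + 1), ‖toFn (p + 1) q‖ := by
      refine Finset.sum_le_sum fun i _ => ?_
      rw [abs_mul, abs_of_nonneg (pow_nonneg hx.1 _)]
      exact (mul_le_of_le_one_right (abs_nonneg _) (pow_le_one₀ hx.1 hx.2)).trans
        (norm_le_pi_norm (toFn (p + 1) q) i)
    _ = (p + 1) * ‖toFn (p + 1) q‖ := by simp
    _ ≤ (p + 1) * (K * ∫ y in (0 : ℝ)..1, |q.eval y|) := by gcongr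
    _ = _ := by ring

/-- Inverse inequality between the sup norm and the `L¹` norm on an arbitrary interval. -/
theorem exists_abs_eval_le_integral (p : ℕ) :
    ∃ K : ℝ, 0 < K ∧ ∀ a b : ℝ, a < b → ∀ q : ℝ[X], q.natDegree ≤ p → ∀ x ∈ Set.Icc a b,
      |q.eval x| ≤ K / (b - a) * ∫ y in a..b, |q.eval y| := by
  obtain ⟨K, hK, h⟩ := exists_abs_eval_le_integral_unitInterval p
  refine ⟨K, hK, fun a b hab q hq x hx => ?_⟩
  have hba : 0 < b - a := sub_pos.mpr hab
  have hdeg : (q.comp (C a + C (b - a) * X)).natDegree ≤ p := by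
    refine natDegree_comp_le.trans ((Nat.mul_le_mul hq ?_).trans_eq (mul_one p))
    compute_degree
  have hx' := h _ hdeg ((x - a) / (b - a))
    ⟨div_nonneg (by linarith [hx.1]) hba.le, (div_le_one hba).mpr (by linarith [hx.2])⟩
  simp only [eval_comp, eval_add, eval_mul, eval_C, eval_X] at hx'
  rw [intervalIntegral.integral_comp_add_mul (fun y => |q.eval y|) hba.ne',
    mul_div_cancel₀ _ hba.ne'] at hx'
  simpa [div_eq_mul_inv, mul_assoc] using hx'

/-- Inverse inequality between the `L²` norm and the `L¹` norm on an arbitrary interval. -/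
theorem exists_integral_sq_eval_le (p : ℕ) :
    ∃ K : ℝ, 0 < K ∧ ∀ a b : ℝ, a < b → ∀ q : ℝ[X], q.natDegree ≤ p →
      ∫ x in a..b, q.eval x ^ 2 ≤ K / (b - a) * (∫ x in a..b, |q.eval x|) ^ 2 := by
  obtain ⟨K, hK, h⟩ := exists_abs_eval_le_integral p
  refine ⟨K, hK, fun a b hab q hq => ?_⟩
  calc ∫ x in a..b, q.eval x ^ 2
      ≤ ∫ x in a..b, K / (b - a) * (∫ y in a..b, |q.eval y|) * |q.eval x| := by
        refine intervalIntegral.integral_mono_on hab.le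
          ((q.continuous.fun_pow 2).intervalIntegrable _ _)
          ((continuous_const.mul q.continuous.abs).intervalIntegrable _ _) fun x hx => ?_
        rw [← sq_abs, sq]
        exact mul_le_mul_of_nonneg_right (h a b hab q hq x hx) (abs_nonneg _)
    _ = _ := by rw [intervalIntegral.integral_const_mul]; ring

/-- The integral of a function that agrees with continuous functions on two adjacent open
intervals. -/
theorem integral_eq_add_of_eqOn_Ioo {a m b : ℝ} (ham : a ≤ m) (hmb : m ≤ b) {f u v : ℝ → ℝ}
    (hu : Continuous u) (hv : Continuous v) (hfu : Set.EqOn f u (Set.Ioo a m))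
    (hfv : Set.EqOn f v (Set.Ioo m b)) :
    ∫ x in a..b, f x = (∫ x in a..m, u x) + ∫ x in m..b, v x := by
  rw [← intervalIntegral.integral_congr_Ioo_of_le ham hfu,
    ← intervalIntegral.integral_congr_Ioo_of_le hmb hfv]
  refine (intervalIntegral.integral_add_adjacent_intervals ?_ ?_).symm
  · exact (hu.intervalIntegrable a m).congr_uIoo (Set.uIoo_of_le ham ▸ hfu.symm)
  · exact (hv.intervalIntegrable m b).congr_uIoo (Set.uIoo_of_le hmb ▸ hfv.symm)

/-- inverse inequality `‖g‖_{L¹} ≥ C h^{1/2} ‖g‖_{L²}` on an interval of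
length `h`, for functions that are polynomial of degree ≤ p on each half of the
interval, with `C > 0` depending only on `p`. -/
theorem inverse_inequality_L1_L2 (p : ℕ) :
    ∃ C : ℝ, 0 < C ∧
      ∀ α β : ℝ, α < β →
      ∀ g : ℝ → ℝ, ∀ ql qr : Polynomial ℝ,
        ql.natDegree ≤ p → qr.natDegree ≤ p →
        (∀ x ∈ Set.Ioo α ((α + β)/2), g x = ql.eval x) →
        (∀ x ∈ Set.Ioo ((α + β)/2) β, g x = qr.eval x) →
        (∫ x in α..β, |g x|) ≥
          C * Real.sqrt (β - α) * Real.sqrt (∫ x in α..β, (g x)^2) := by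
  obtain ⟨K, hK, h⟩ := exists_integral_sq_eval_le p
  refine ⟨(√(2 * K))⁻¹, by positivity, fun α β hαβ g ql qr hql hqr hgl hgr => ?_⟩
  have hαm : α < (α + β) / 2 := by linarith
  have hmβ : (α + β) / 2 < β := by linarith
  have hβα : 0 < β - α := sub_pos.mpr hαβ
  have hl := h _ _ hαm ql hql
  have hr := h _ _ hmβ qr hqr
  rw [integral_eq_add_of_eqOn_Ioo hαm.le hmβ.le ql.continuous.abs qr.continuous.abs
      (fun x hx => by simp only [hgl x hx]) (fun x hx => by simp only [hgr x hx]),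
    integral_eq_add_of_eqOn_Ioo hαm.le hmβ.le (ql.continuous.fun_pow 2) (qr.continuous.fun_pow 2)
      (fun x hx => by simp only [hgl x hx]) (fun x hx => by simp only [hgr x hx])]
  have hA : 0 ≤ ∫ x in α..(α + β) / 2, |ql.eval x| :=
    intervalIntegral.integral_nonneg hαm.le fun _ _ => abs_nonneg _
  have hB : 0 ≤ ∫ x in (α + β) / 2..β, |qr.eval x| :=
    intervalIntegral.integral_nonneg hmβ.le fun _ _ => abs_nonneg _
  set A := ∫ x in α..(α + β) / 2, |ql.eval x|
  set B := ∫ x in (α + β) / 2..β, |qr.eval x|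
  rw [show (α + β) / 2 - α = (β - α) / 2 by ring, div_mul_eq_mul_div, le_div_iff₀ (by positivity)]
    at hl
  rw [show β - (α + β) / 2 = (β - α) / 2 by ring, div_mul_eq_mul_div, le_div_iff₀ (by positivity)]
    at hr
  rw [ge_iff_le, mul_assoc, inv_mul_le_iff₀ (by positivity), ← Real.sqrt_mul hβα.le]
  refine Real.sqrt_le_iff.mpr ⟨by positivity, ?_⟩
  rw [mul_pow, Real.sq_sqrt (by positivity)]
  nlinarith [mul_nonneg hK.le (mul_nonneg hA hB)]
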